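/- arXiv:2402.13156 — 3 statements merged into one kernel-verified Lean document; each statement's English description precedes it below -/
import Mathlib

section
/- Fix a principal–agent instance whose uncertainty set C ⊆ [0,1]^A is convex, and for δ ∈ [0,1], c0 ∈ C and a deterministic contract p, let R_{δ,c0}(p) := sup_{c∈C_δ(c0)}(OPT(c) − U^p(p,c)). Then for every δ ∈ [0,1], h ∈ [0,1] with δ + h ≤ 1, and c0 ∈ C: 0 ≤ inf_p R_{δ+h,c0}(p) − inf_p R_{δ,c0}(p) ≤ 4·√(2h), where the infima range over all deterministic contracts. -/
open Finset

variable {A Ω : Type} [Fintype A] [Fintype Ω] [Nonempty A] [Nonempty Ω]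

/-- Agent's expected utility `U^a(p,c,a)` of action `a` under contract `p` and costs `c`. -/
noncomputable def Uag (F : A → Ω → ℝ) (p : Ω → ℝ) (c : A → ℝ) (a : A) : ℝ :=
  (∑ ω, F a ω * p ω) - c a

/-- Principal's expected utility when the agent plays action `a` under contract `p`. -/
noncomputable def prinAct (F : A → Ω → ℝ) (r p : Ω → ℝ) (a : A) : ℝ :=
  ∑ ω, F a ω * (r ω - p ω)

/-- Principal's expected utility `U^p(p,c)`: the agent plays a best response,
with ties among best responses broken in favor of the principal. -/
noncomputable def Uprin (F : A → Ω → ℝ) (r p : Ω → ℝ) (c : A → ℝ) : ℝ :=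
  sSup { x | ∃ a : A, (∀ a' : A, Uag F p c a' ≤ Uag F p c a) ∧ x = prinAct F r p a }

/-- A deterministic contract: nonnegative payments. -/
def IsContract (p : Ω → ℝ) : Prop := ∀ ω, 0 ≤ p ω

/-- `OPT(c)`: the supremum over contracts of the principal's expected utility against `c`. -/
noncomputable def OPT (F : A → Ω → ℝ) (r : Ω → ℝ) (c : A → ℝ) : ℝ :=
  sSup { x | ∃ p : Ω → ℝ, IsContract p ∧ x = Uprin F r p c }

/-- The regret `R(p)` of a deterministic contract `p`. -/
noncomputable def regret (F : A → Ω → ℝ) (r : Ω → ℝ) (C : Set (A → ℝ)) (p : Ω → ℝ) : ℝ :=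
  sSup { x | ∃ c ∈ C, x = OPT F r c - Uprin F r p c }

/-- Uncertainty level `d(C)`: the L∞-diameter of the uncertainty set. -/
noncomputable def uncLevel (C : Set (A → ℝ)) : ℝ :=
  sSup { x | ∃ c ∈ C, ∃ c' ∈ C, x = ‖c - c'‖ }

/-- The assumptions defining a principal–agent instance `(A, Ω, r, C, F)`. -/
structure IsPAInstance (F : A → Ω → ℝ) (r : Ω → ℝ) (C : Set (A → ℝ)) : Prop where
  r_mem : ∀ ω, r ω ∈ Set.Icc (0:ℝ) 1
  F_mem : ∀ a ω, F a ω ∈ Set.Icc (0:ℝ) 1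
  F_sum : ∀ a, ∑ ω, F a ω = 1
  C_nonempty : C.Nonempty
  C_mem : ∀ c ∈ C, ∀ a, c a ∈ Set.Icc (0:ℝ) 1
  zero_action : ∃ a : A, ∀ c ∈ C, c a = 0

/-- The `δ`-scaling of the uncertainty set `C` centered at `c0`. -/
def scaledSet (C : Set (A → ℝ)) (δ : ℝ) (c0 : A → ℝ) : Set (A → ℝ) :=
  { x | ∃ c ∈ C, x = δ • c + (1 - δ) • c0 }

/-- The regret `R_{δ,c0}(p)` of a deterministic contract `p` in the instance whose
uncertainty set is the `δ`-scaling of `C` centered at `c0`. -/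
noncomputable def regretScaled (F : A → Ω → ℝ) (r : Ω → ℝ) (C : Set (A → ℝ))
    (δ : ℝ) (c0 : A → ℝ) (p : Ω → ℝ) : ℝ :=
  sSup { x | ∃ c ∈ scaledSet C δ c0, x = OPT F r c - Uprin F r p c }

/-!
If the principal adds to a contract `p` a share `s` of her own profit `r - p`, the agent's utility
from an action rises by `s` times the principal's utility from it under `p`, and the principal
keeps the fraction `1 - s` of that utility. Changing the costs by at most `h` shifts comparisons
between actions by at most `2h`, so the agent's new best response is worth at most `2h / s` less to
the principal. Balancing the losses `s` and `2h / s` at `s = √(2h)` gives a total loss of at most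
`2√(2h)`. This bounds both the change of `OPT` and the change of the utility of a contract, hence
the regret moves by at most `4√(2h)` when every cost vector moves by at most `h`.
-/

section ProfitSharing

variable {A Ω : Type}

/-- The contract obtained from `p` by handing the agent in addition the share `s` of the
principal's profit `r - p`. -/
def profitShare (r p : Ω → ℝ) (s : ℝ) : Ω → ℝ := p + s • (r - p)

theorem profitShare_zero (r p : Ω → ℝ) : profitShare r p 0 = p := by
  simp [profitShare]

theorem isContract_profitShare {r p : Ω → ℝ} {s : ℝ} (hr : 0 ≤ r) (hp : IsContract p)
    (hs₀ : 0 ≤ s) (hs₁ : s ≤ 1) : IsContract (profitShare r p s) := fun ω ↦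
  calc
    0 ≤ (1 - s) * p ω + s * r ω :=
      add_nonneg (mul_nonneg (sub_nonneg.2 hs₁) (hp ω)) (mul_nonneg hs₀ (hr ω))
    _ = p ω + s * (r ω - p ω) := by ring

theorem isContract_profitShare_min_sqrt {r p : Ω → ℝ} (hr : 0 ≤ r) (hp : IsContract p) (h : ℝ) :
    IsContract (profitShare r p (min √(2 * h) 1)) :=
  isContract_profitShare hr hp (le_min (Real.sqrt_nonneg _) zero_le_one) (min_le_right _ _)

variable [Fintype Ω]

theorem prinAct_profitShare (F : A → Ω → ℝ) (r p : Ω → ℝ) (s : ℝ) (a : A) :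
    prinAct F r (profitShare r p s) a = (1 - s) * prinAct F r p a := by
  simp only [prinAct, profitShare, Pi.add_apply, Pi.smul_apply, Pi.sub_apply, smul_eq_mul, mul_sum]
  exact sum_congr rfl fun ω _ ↦ by ring

theorem Uag_profitShare (F : A → Ω → ℝ) (r p : Ω → ℝ) (s : ℝ) (c : A → ℝ) (a : A) :
    Uag F (profitShare r p s) c a = Uag F p c a + s * prinAct F r p a := by
  simp only [Uag, prinAct, profitShare, Pi.add_apply, Pi.smul_apply, Pi.sub_apply, smul_eq_mul,
    mul_add, sum_add_distrib, mul_sum, mul_left_comm]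
  ring

end ProfitSharing

section ScaledSet

variable {A : Type} {C : Set (A → ℝ)} {c₀ : A → ℝ}

theorem scaledSet_nonempty (hC : C.Nonempty) (δ : ℝ) (c₀ : A → ℝ) : (scaledSet C δ c₀).Nonempty :=
  hC.imp' _ fun c hc ↦ ⟨c, hc, rfl⟩

theorem scaledSet_subset_scaledSet (hC : StarConvex ℝ c₀ C) {δ ε : ℝ} (hδ : 0 ≤ δ) (hδε : δ ≤ ε) :
    scaledSet C δ c₀ ⊆ scaledSet C ε c₀ := by
  rintro _ ⟨c, hc, rfl⟩
  obtain rfl | hε := (hδ.trans hδε).eq_or_lt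
  · exact ⟨c, hc, by rw [le_antisymm hδε hδ]⟩
  · refine ⟨c₀ + (δ / ε) • (c - c₀),
      hC.add_smul_sub_mem hc (div_nonneg hδ hε.le) (div_le_one_of_le₀ hδε hε.le), ?_⟩
    rw [smul_add, smul_smul, mul_div_cancel₀ _ hε.ne']
    module

theorem exists_mem_scaledSet_norm_sub_le [Fintype A] {R δ ε : ℝ} (hC : C ⊆ Metric.closedBall c₀ R)
    {c : A → ℝ} (hc : c ∈ scaledSet C ε c₀) :
    ∃ c' ∈ scaledSet C δ c₀, ‖c - c'‖ ≤ |ε - δ| * R := by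
  obtain ⟨d, hd, rfl⟩ := hc
  refine ⟨_, ⟨d, hd, rfl⟩, ?_⟩
  calc
    ‖ε • d + (1 - ε) • c₀ - (δ • d + (1 - δ) • c₀)‖ = ‖(ε - δ) • (d - c₀)‖ := by
      congr 1; module
    _ = |ε - δ| * ‖d - c₀‖ := norm_smul _ _
    _ ≤ |ε - δ| * R :=
      mul_le_mul_of_nonneg_left (mem_closedBall_iff_norm.1 (hC hd)) (abs_nonneg _)

end ScaledSet

section Regret

variable {A Ω : Type} [Fintype Ω] {F : A → Ω → ℝ} {r p : Ω → ℝ} {c c' : A → ℝ}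
  {D D' : Set (A → ℝ)} {B h : ℝ}

/-- The least regret `inf_p R(p)` over all deterministic contracts, for the uncertainty set `D`. -/
noncomputable def minRegret (F : A → Ω → ℝ) (r : Ω → ℝ) (D : Set (A → ℝ)) : ℝ :=
  sInf {x | ∃ p : Ω → ℝ, IsContract p ∧ x = regret F r D p}

theorem prinAct_le_one (hF : ∀ a, F a ∈ stdSimplex ℝ Ω) (hr : r ≤ 1) (hp : IsContract p) (a : A) :
    prinAct F r p a ≤ 1 :=
  calc
    ∑ ω, F a ω * (r ω - p ω) ≤ ∑ ω, F a ω :=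
      sum_le_sum fun ω _ ↦ mul_le_of_le_one_right ((hF a).1 ω)
        ((sub_le_self _ (hp ω)).trans (hr ω))
    _ = 1 := (hF a).2

theorem OPT_le (hB : ∀ p, IsContract p → Uprin F r p c ≤ B) : OPT F r c ≤ B := by
  refine csSup_le ⟨_, 0, fun _ ↦ le_rfl, rfl⟩ ?_
  rintro _ ⟨p, hp, rfl⟩
  exact hB p hp

theorem regret_le (hD : D.Nonempty) (hB : ∀ c ∈ D, OPT F r c - Uprin F r p c ≤ B) :
    regret F r D p ≤ B := by
  refine csSup_le (hD.imp' _ fun c hc ↦ ⟨c, hc, rfl⟩) ?_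
  rintro _ ⟨c, hc, rfl⟩
  exact hB c hc

theorem le_minRegret (hB : ∀ p, IsContract p → B ≤ regret F r D p) : B ≤ minRegret F r D := by
  refine le_csInf ⟨_, 0, fun _ ↦ le_rfl, rfl⟩ ?_
  rintro _ ⟨p, hp, rfl⟩
  exact hB p hp

section FiniteActions

variable [Finite A] [Nonempty A]

theorem exists_bestResponse_Uprin_eq (F : A → Ω → ℝ) (r p : Ω → ℝ) (c : A → ℝ) :
    ∃ a, (∀ a', Uag F p c a' ≤ Uag F p c a) ∧ Uprin F r p c = prinAct F r p a := by
  let S : Set ℝ := {x | ∃ a, (∀ a', Uag F p c a' ≤ Uag F p c a) ∧ x = prinAct F r p a}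
  have S_finite : S.Finite :=
    (Set.finite_range (prinAct F r p)).subset fun _ ⟨a, _, ha⟩ ↦ ⟨a, ha.symm⟩
  have S_nonempty : S.Nonempty :=
    let ⟨a, ha⟩ := Finite.exists_max (Uag F p c)
    ⟨_, a, ha, rfl⟩
  exact S_nonempty.csSup_mem S_finite

theorem Uprin_le_one (hF : ∀ a, F a ∈ stdSimplex ℝ Ω) (hr : r ≤ 1) (hp : IsContract p)
    (c : A → ℝ) : Uprin F r p c ≤ 1 := by
  obtain ⟨a, -, hUprin⟩ := exists_bestResponse_Uprin_eq F r p c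
  exact hUprin.trans_le (prinAct_le_one hF hr hp a)

theorem Uprin_le_OPT (hF : ∀ a, F a ∈ stdSimplex ℝ Ω) (hr : r ≤ 1) (hp : IsContract p)
    (c : A → ℝ) : Uprin F r p c ≤ OPT F r c := by
  refine le_csSup ⟨1, ?_⟩ ⟨p, hp, rfl⟩
  rintro _ ⟨q, hq, rfl⟩
  exact Uprin_le_one hF hr hq c

theorem OPT_sub_Uprin_le_regret (hF : ∀ a, F a ∈ stdSimplex ℝ Ω) (hr : r ≤ 1) (p : Ω → ℝ)
    (hc : c ∈ D) : OPT F r c - Uprin F r p c ≤ regret F r D p := by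
  obtain ⟨m, hm⟩ := Finite.exists_min (prinAct F r p)
  refine le_csSup ⟨1 - prinAct F r p m, ?_⟩ ⟨c, hc, rfl⟩
  rintro _ ⟨d, -, rfl⟩
  obtain ⟨a, -, hUprin⟩ := exists_bestResponse_Uprin_eq F r p d
  exact sub_le_sub (OPT_le fun q hq ↦ Uprin_le_one hF hr hq d) ((hm a).trans_eq hUprin.symm)

theorem regret_nonneg (hF : ∀ a, F a ∈ stdSimplex ℝ Ω) (hr : r ≤ 1) (hp : IsContract p) :
    0 ≤ regret F r D p := by
  refine Real.sSup_nonneg ?_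
  rintro _ ⟨c, -, rfl⟩
  exact sub_nonneg.2 (Uprin_le_OPT hF hr hp c)

theorem regret_mono (hF : ∀ a, F a ∈ stdSimplex ℝ Ω) (hr : r ≤ 1) (hD : D.Nonempty)
    (hDD' : D ⊆ D') (p : Ω → ℝ) : regret F r D p ≤ regret F r D' p :=
  regret_le hD fun _ hc ↦ OPT_sub_Uprin_le_regret hF hr p (hDD' hc)

theorem minRegret_le_regret (hF : ∀ a, F a ∈ stdSimplex ℝ Ω) (hr : r ≤ 1) (hp : IsContract p) :
    minRegret F r D ≤ regret F r D p := by
  refine csInf_le ⟨0, ?_⟩ ⟨p, hp, rfl⟩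
  rintro _ ⟨q, hq, rfl⟩
  exact regret_nonneg hF hr hq

theorem minRegret_mono (hF : ∀ a, F a ∈ stdSimplex ℝ Ω) (hr : r ≤ 1) (hD : D.Nonempty)
    (hDD' : D ⊆ D') : minRegret F r D ≤ minRegret F r D' :=
  le_minRegret fun p hp ↦ (minRegret_le_regret hF hr hp).trans (regret_mono hF hr hD hDD' p)

end FiniteActions

variable [Fintype A] [Nonempty A]

-- Multiplied through by `s`, so that `s = 0` is allowed.
theorem one_sub_mul_Uprin_le_Uprin_profitShare {s : ℝ} (hs₁ : s ≤ 1) (hcc' : ‖c - c'‖ ≤ h) :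
    (1 - s) * (s * Uprin F r p c' - 2 * h) ≤ s * Uprin F r (profitShare r p s) c := by
  obtain ⟨a, ha, hUprin_a⟩ := exists_bestResponse_Uprin_eq F r p c'
  obtain ⟨b, hb, hUprin_b⟩ := exists_bestResponse_Uprin_eq F r (profitShare r p s) c
  have cost_close (d : A) : |c d - c' d| ≤ h := (norm_le_pi_norm (c - c') d).trans hcc'
  have b_almost_as_good : s * prinAct F r p a - 2 * h ≤ s * prinAct F r p b := by
    have b_better := hb a
    have a_better := ha b
    simp only [Uag_profitShare] at b_better
    simp only [Uag] at a_better b_better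
    linarith [(abs_le.1 (cost_close a)).2, (abs_le.1 (cost_close b)).1]
  calc
    (1 - s) * (s * Uprin F r p c' - 2 * h) ≤ (1 - s) * (s * prinAct F r p b) := by
      rw [hUprin_a]
      exact mul_le_mul_of_nonneg_left b_almost_as_good (sub_nonneg.2 hs₁)
    _ = s * Uprin F r (profitShare r p s) c := by
      rw [hUprin_b, prinAct_profitShare]
      ring

theorem Uprin_le_Uprin_profitShare_add (hF : ∀ a, F a ∈ stdSimplex ℝ Ω) (hr : r ≤ 1)
    (hp : IsContract p) (hcc' : ‖c - c'‖ ≤ h) :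
    Uprin F r p c' ≤ Uprin F r (profitShare r p (min √(2 * h) 1)) c + 2 * √(2 * h) := by
  have hU := Uprin_le_one hF hr hp c'
  have h_nonneg : 0 ≤ h := (norm_nonneg _).trans hcc'
  obtain rfl | h_pos := h_nonneg.eq_or_lt
  · obtain rfl : c = c' := sub_eq_zero.1 (norm_le_zero_iff.1 hcc')
    simp [profitShare_zero]
  have sqrt_pos : 0 < √(2 * h) := by positivity
  have sq_sqrt : √(2 * h) * √(2 * h) = 2 * h := Real.mul_self_sqrt (by positivity)
  have key := one_sub_mul_Uprin_le_Uprin_profitShare (F := F) (r := r) (p := p)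
    (min_le_right √(2 * h) 1) hcc'
  obtain sqrt_le | one_le := le_total √(2 * h) 1
  · rw [min_eq_left sqrt_le] at key ⊢
    have key_div : (1 - √(2 * h)) * (Uprin F r p c' - √(2 * h))
        ≤ Uprin F r (profitShare r p √(2 * h)) c :=
      le_of_mul_le_mul_left (by linear_combination key - (1 - √(2 * h)) * sq_sqrt) sqrt_pos
    linarith [mul_le_mul_of_nonneg_left hU sqrt_pos.le, mul_self_nonneg √(2 * h)]
  · rw [min_eq_right one_le] at key ⊢
    linarith

theorem OPT_le_OPT_add (hF : ∀ a, F a ∈ stdSimplex ℝ Ω) (hr : r ∈ Set.Icc 0 1)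
    (hcc' : ‖c - c'‖ ≤ h) : OPT F r c ≤ OPT F r c' + 2 * √(2 * h) :=
  OPT_le fun p hp ↦
    calc
      Uprin F r p c ≤ Uprin F r (profitShare r p (min √(2 * h) 1)) c' + 2 * √(2 * h) :=
        Uprin_le_Uprin_profitShare_add hF hr.2 hp (norm_sub_rev c c' ▸ hcc')
      _ ≤ OPT F r c' + 2 * √(2 * h) := by
        gcongr
        exact Uprin_le_OPT hF hr.2 (isContract_profitShare_min_sqrt hr.1 hp h) c'

theorem regret_profitShare_le_regret_add (hF : ∀ a, F a ∈ stdSimplex ℝ Ω) (hr : r ∈ Set.Icc 0 1)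
    (hp : IsContract p) (hD : D.Nonempty) (hDD' : ∀ c ∈ D, ∃ c' ∈ D', ‖c - c'‖ ≤ h) :
    regret F r D (profitShare r p (min √(2 * h) 1)) ≤ regret F r D' p + 4 * √(2 * h) := by
  refine regret_le hD fun c hc ↦ ?_
  obtain ⟨c', hc', hcc'⟩ := hDD' c hc
  linarith [OPT_le_OPT_add hF hr hcc', Uprin_le_Uprin_profitShare_add hF hr.2 hp hcc',
    OPT_sub_Uprin_le_regret hF hr.2 p hc']

theorem minRegret_le_minRegret_add (hF : ∀ a, F a ∈ stdSimplex ℝ Ω) (hr : r ∈ Set.Icc 0 1)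
    (hD : D.Nonempty) (hDD' : ∀ c ∈ D, ∃ c' ∈ D', ‖c - c'‖ ≤ h) :
    minRegret F r D ≤ minRegret F r D' + 4 * √(2 * h) := by
  rw [← sub_le_iff_le_add]
  refine le_minRegret fun p hp ↦ sub_le_iff_le_add.2 ?_
  exact (minRegret_le_regret hF hr.2 (isContract_profitShare_min_sqrt hr.1 hp h)).trans
    (regret_profitShare_le_regret_add hF hr hp hD hDD')

theorem regret_holder_in_uncertainty_level_general {C : Set (A → ℝ)} {c₀ : A → ℝ} {R δ : ℝ}
    (hF : ∀ a, F a ∈ stdSimplex ℝ Ω) (hr : r ∈ Set.Icc 0 1) (hc₀ : c₀ ∈ C)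
    (hstar : StarConvex ℝ c₀ C) (hC : C ⊆ Metric.closedBall c₀ R) (hδ : 0 ≤ δ) (hh : 0 ≤ h) :
    minRegret F r (scaledSet C (δ + h) c₀) - minRegret F r (scaledSet C δ c₀) ∈
      Set.Icc 0 (4 * √(2 * (h * R))) := by
  have hne (ε : ℝ) := scaledSet_nonempty ⟨c₀, hc₀⟩ ε c₀
  have hsub : scaledSet C δ c₀ ⊆ scaledSet C (δ + h) c₀ :=
    scaledSet_subset_scaledSet hstar hδ (le_add_of_nonneg_right hh)
  have hclose : ∀ c ∈ scaledSet C (δ + h) c₀, ∃ c' ∈ scaledSet C δ c₀, ‖c - c'‖ ≤ h * R := by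
    simpa only [add_sub_cancel_left, abs_of_nonneg hh] using
      fun c ↦ exists_mem_scaledSet_norm_sub_le (δ := δ) (ε := δ + h) (c := c) hC
  exact ⟨sub_nonneg.2 (minRegret_mono hF hr.2 (hne δ) hsub),
    sub_le_iff_le_add'.2 (minRegret_le_minRegret_add hF hr (hne _) hclose)⟩

end Regret

namespace IsPAInstance

variable {A Ω : Type} [Fintype Ω] {F : A → Ω → ℝ} {r : Ω → ℝ} {C : Set (A → ℝ)}

theorem mem_stdSimplex (hInst : IsPAInstance F r C) (a : A) : F a ∈ stdSimplex ℝ Ω :=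
  ⟨fun ω ↦ (hInst.F_mem a ω).1, hInst.F_sum a⟩

theorem reward_mem_Icc (hInst : IsPAInstance F r C) : r ∈ Set.Icc 0 1 :=
  ⟨fun ω ↦ (hInst.r_mem ω).1, fun ω ↦ (hInst.r_mem ω).2⟩

theorem subset_closedBall [Fintype A] (hInst : IsPAInstance F r C) {c₀ : A → ℝ} (hc₀ : c₀ ∈ C) :
    C ⊆ Metric.closedBall c₀ 1 := fun c hc ↦
  (dist_pi_le_iff zero_le_one).2 fun a ↦
    Real.dist_le_of_mem_Icc_01 (hInst.C_mem c hc a) (hInst.C_mem c₀ hc₀ a)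

end IsPAInstance

/-- In an instance with convex uncertainty set, for every `δ, h ∈ [0,1]`
with `δ + h ≤ 1` and every center `c0 ∈ C`:
`0 ≤ inf_p R_{δ+h,c0}(p) − inf_p R_{δ,c0}(p) ≤ 4√(2h)`. -/
theorem regret_holder_in_uncertainty_level
    {A Ω : Type} [Fintype A] [Fintype Ω] [Nonempty A] [Nonempty Ω]
    (F : A → Ω → ℝ) (r : Ω → ℝ) (C : Set (A → ℝ))
    (hInst : IsPAInstance F r C) (hconv : Convex ℝ C)
    (δ h : ℝ) (hδ : δ ∈ Set.Icc (0:ℝ) 1) (hh : h ∈ Set.Icc (0:ℝ) 1)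
    (hδh : δ + h ≤ 1) (c0 : A → ℝ) (hc0 : c0 ∈ C) :
    0 ≤ sInf { x | ∃ p : Ω → ℝ, IsContract p ∧ x = regretScaled F r C (δ + h) c0 p }
        - sInf { x | ∃ p : Ω → ℝ, IsContract p ∧ x = regretScaled F r C δ c0 p } ∧
      sInf { x | ∃ p : Ω → ℝ, IsContract p ∧ x = regretScaled F r C (δ + h) c0 p }
        - sInf { x | ∃ p : Ω → ℝ, IsContract p ∧ x = regretScaled F r C δ c0 p }
        ≤ 4 * Real.sqrt (2 * h) := by
  have hbound := regret_holder_in_uncertainty_level_general hInst.mem_stdSimplex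
    hInst.reward_mem_Icc hc0 (hconv.starConvex hc0) (hInst.subset_closedBall hc0) hδ.1 hh.1
  rw [mul_one] at hbound
  exact hbound
end

section
/- For every δ ∈ [0,1/2], in the hard instance I_δ: (i) the randomized contract γ placing probability 1/2 on each of the deterministic contracts p^1 = (0,0) and p^2 = (√(δ/2), 0) (payments listed as (p_{ω1}, p_{ω2})) satisfies R(γ) = √(δ/8); and (ii) every menu of deterministic contracts Π of any finite size satisfies R(Π) ≥ √(δ/4). -/
open Finset

variable {A Ω : Type} [Fintype A] [Fintype Ω] [Nonempty A] [Nonempty Ω]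

/-- The agent's best-response utility under contract `p`. -/
noncomputable def agentBest (F : A → Ω → ℝ) (p : Ω → ℝ) (c : A → ℝ) : ℝ :=
  ⨆ a : A, Uag F p c a

/-- Principal's expected utility `U^p(Π,c)` under a menu of deterministic contracts:
the agent selects an element maximizing its own utility, breaking ties in favor of
the principal. -/
noncomputable def UprinMenu (F : A → Ω → ℝ) (r : Ω → ℝ) {K : ℕ} (m : Fin K → Ω → ℝ)
    (c : A → ℝ) : ℝ :=
  sSup { x | ∃ i : Fin K, (∀ j : Fin K, agentBest F (m j) c ≤ agentBest F (m i) c) ∧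
    x = Uprin F r (m i) c }

/-- The regret `R(Π)` of a menu of deterministic contracts. -/
noncomputable def regretMenu (F : A → Ω → ℝ) (r : Ω → ℝ) (C : Set (A → ℝ)) {K : ℕ}
    (m : Fin K → Ω → ℝ) : ℝ :=
  sSup { x | ∃ c ∈ C, x = OPT F r c - UprinMenu F r m c }

/-- A randomized contract: a finitely supported probability distribution over
deterministic contracts, represented as a finite tuple of contracts with probabilities. -/
structure RandCon (Ω : Type) where
  n : ℕ
  ps : Fin n → Ω → ℝ
  q : Fin n → ℝ
  q_nonneg : ∀ i, 0 ≤ q i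
  q_sum : ∑ i, q i = 1

/-- All the contracts in the support are genuine (nonnegative) contracts. -/
def RandCon.valid {Ω : Type} (γ : RandCon Ω) : Prop := ∀ i ω, 0 ≤ γ.ps i ω

/-- Agent's expected utility `U^a(γ,c)` of a randomized contract. -/
noncomputable def UagRand (F : A → Ω → ℝ) (γ : RandCon Ω) (c : A → ℝ) : ℝ :=
  ∑ i, γ.q i * (⨆ a : A, Uag F (γ.ps i) c a)

/-- Principal's expected utility `U^p(γ,c)` of a randomized contract. -/
noncomputable def UprinRand (F : A → Ω → ℝ) (r : Ω → ℝ) (γ : RandCon Ω) (c : A → ℝ) : ℝ :=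
  ∑ i, γ.q i * Uprin F r (γ.ps i) c

/-- The regret `R(γ)` of a randomized contract. -/
noncomputable def regretRand (F : A → Ω → ℝ) (r : Ω → ℝ) (C : Set (A → ℝ))
    (γ : RandCon Ω) : ℝ :=
  sSup { x | ∃ c ∈ C, x = OPT F r c - UprinRand F r γ c }

/-- Principal's expected utility `U^p(Γ,c)` under a menu of randomized contracts:
the agent selects an element maximizing its own expected utility, breaking ties in
favor of the principal. -/
noncomputable def UprinRMenu (F : A → Ω → ℝ) (r : Ω → ℝ) {K : ℕ} (Γ : Fin K → RandCon Ω)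
    (c : A → ℝ) : ℝ :=
  sSup { x | ∃ i : Fin K, (∀ j : Fin K, UagRand F (Γ j) c ≤ UagRand F (Γ i) c) ∧
    x = UprinRand F r (Γ i) c }

/-- The regret `R(Γ)` of a menu of randomized contracts. -/
noncomputable def regretRMenu (F : A → Ω → ℝ) (r : Ω → ℝ) (C : Set (A → ℝ)) {K : ℕ}
    (Γ : Fin K → RandCon Ω) : ℝ :=
  sSup { x | ∃ c ∈ C, x = OPT F r c - UprinRMenu F r Γ c }

/-- The randomized contract placing probability `1/2` on each of two given
deterministic contracts. -/
noncomputable def uniform2 {Ω : Type} (p1 p2 : Ω → ℝ) : RandCon Ω where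
  n := 2
  ps := ![p1, p2]
  q := fun _ => 1/2
  q_nonneg := fun _ => by norm_num
  q_sum := by norm_num [Fin.sum_univ_two]

/-!
Write `s = √(2δ)`, so that in the second cost vector the action `a₁` costs `δ = s · (s/2)`. With
nonnegative payments, `a₁` is then a best response only if success pays at least `s/2`, and under
`a₂` the principal earns at most `1 - s`; hence `OPT = 1 - s/2`, against `OPT = 1` at zero cost.

A menu cannot serve both cost vectors. If the agent with costs `(δ, 0)` plays `a₂`, the principal
loses `(1 - s/2) - (1 - s) = s/2`. If it plays `a₁`, then the menu contains a contract paying `s/2`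
on success, the zero-cost agent can secure `s/2` from it, and since the total surplus is at most `1`
the principal loses `s/2` there. Mixing evenly the optimal contracts of the two cost vectors
instead halves both losses.
-/

theorem exists_argmax_sSup_eq {ι : Type*} [Finite ι] [Nonempty ι] (f g : ι → ℝ) :
    ∃ i, (∀ j, f j ≤ f i) ∧ sSup {x | ∃ i, (∀ j, f j ≤ f i) ∧ x = g i} = g i := by
  have finite : {x | ∃ i, (∀ j, f j ≤ f i) ∧ x = g i}.Finite :=
    (Set.finite_range g).subset <| by rintro _ ⟨i, -, rfl⟩; exact ⟨i, rfl⟩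
  obtain ⟨i, hi⟩ := Finite.exists_max f
  have nonempty : {x | ∃ i, (∀ j, f j ≤ f i) ∧ x = g i}.Nonempty := ⟨g i, i, hi, rfl⟩
  exact nonempty.csSup_mem finite

theorem sSup_exists_mem_pair {α : Type*} (f : α → ℝ) (x y : α) :
    sSup {u | ∃ z ∈ ({x, y} : Set α), u = f z} = max (f x) (f y) := by
  rw [← csSup_pair, ← Set.image_pair]
  simp only [Set.image, eq_comm]

theorem ite_eq_single {ι : Type*} [DecidableEq ι] (i : ι) (x : ℝ) :
    (fun j => if j = i then x else 0) = Pi.single i x :=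
  funext fun j => (Pi.single_apply i x j).symm

theorem sqrt_div_sq {x k : ℝ} (hk : 0 ≤ k) : √(x / k ^ 2) = √x / k := by
  rw [Real.sqrt_div' _ (sq_nonneg k), Real.sqrt_sq hk]

section PrincipalAgent

variable {Act Out : Type} [Fintype Out] {F : Act → Out → ℝ} {r p : Out → ℝ} {c : Act → ℝ}
  {a : Act}

/-- The action `a` belongs to the best-response set `A*(p,c)`. -/
def IsBestResponse (F : Act → Out → ℝ) (p : Out → ℝ) (c : Act → ℝ) (a : Act) : Prop :=
  ∀ a', Uag F p c a' ≤ Uag F p c a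

theorem exists_isBestResponse_Uprin_eq [Finite Act] [Nonempty Act] (F : Act → Out → ℝ)
    (r p : Out → ℝ) (c : Act → ℝ) :
    ∃ a, IsBestResponse F p c a ∧ Uprin F r p c = prinAct F r p a :=
  exists_argmax_sSup_eq (Uag F p c) (prinAct F r p)

theorem IsBestResponse.Uprin_eq (ha : IsBestResponse F p c a)
    (hmax : ∀ b, IsBestResponse F p c b → prinAct F r p b ≤ prinAct F r p a) :
    Uprin F r p c = prinAct F r p a :=
  IsGreatest.csSup_eq ⟨⟨a, ha, rfl⟩, by rintro _ ⟨b, hb, rfl⟩; exact hmax b hb⟩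

theorem OPT_eq_of_forall_Uprin_le (hp : IsContract p)
    (hmax : ∀ q, IsContract q → Uprin F r q c ≤ Uprin F r p c) :
    OPT F r c = Uprin F r p c :=
  IsGreatest.csSup_eq ⟨⟨p, hp, rfl⟩, by rintro _ ⟨q, hq, rfl⟩; exact hmax q hq⟩

theorem Uag_le_agentBest [Finite Act] (F : Act → Out → ℝ) (p : Out → ℝ) (c : Act → ℝ) (a : Act) :
    Uag F p c a ≤ agentBest F p c :=
  le_ciSup (Set.finite_range (Uag F p c)).bddAbove a

theorem prinAct_add_Uag (F : Act → Out → ℝ) (r p : Out → ℝ) (c : Act → ℝ) (a : Act) :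
    prinAct F r p a + Uag F p c a = ∑ ω, F a ω * r ω - c a := by
  simp only [prinAct, Uag, mul_sub, sum_sub_distrib]
  ring

theorem prinAct_le_sum_reward (hF : ∀ ω, 0 ≤ F a ω) (hp : IsContract p) :
    prinAct F r p a ≤ ∑ ω, F a ω * r ω :=
  sum_le_sum fun ω _ => mul_le_mul_of_nonneg_left (sub_le_self _ (hp ω)) (hF ω)

theorem Uprin_add_agentBest_le [Finite Act] [Nonempty Act] {W : ℝ}
    (hW : ∀ a, ∑ ω, F a ω * r ω - c a ≤ W) :
    Uprin F r p c + agentBest F p c ≤ W := by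
  obtain ⟨a, ha, hU⟩ := exists_isBestResponse_Uprin_eq F r p c
  have hbest : agentBest F p c ≤ Uag F p c a := ciSup_le ha
  linarith [prinAct_add_Uag F r p c a, hW a]

theorem exists_UprinMenu_eq {K : ℕ} [NeZero K] (F : Act → Out → ℝ) (r : Out → ℝ)
    (m : Fin K → Out → ℝ) (c : Act → ℝ) :
    ∃ i, (∀ j, agentBest F (m j) c ≤ agentBest F (m i) c) ∧
      UprinMenu F r m c = Uprin F r (m i) c :=
  exists_argmax_sSup_eq (fun i => agentBest F (m i) c) (fun i => Uprin F r (m i) c)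

theorem UprinMenu_add_agentBest_le [Finite Act] [Nonempty Act] {K : ℕ} (m : Fin K → Out → ℝ)
    {W : ℝ} (hW : ∀ a, ∑ ω, F a ω * r ω - c a ≤ W) (i : Fin K) :
    UprinMenu F r m c + agentBest F (m i) c ≤ W := by
  have : NeZero K := .of_pos i.pos
  obtain ⟨j, hj, hU⟩ := exists_UprinMenu_eq F r m c
  linarith [hj i, Uprin_add_agentBest_le (p := m j) hW]

theorem regretMenu_pair {K : ℕ} (F : Act → Out → ℝ) (r : Out → ℝ) (c c' : Act → ℝ)
    (m : Fin K → Out → ℝ) :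
    regretMenu F r {c, c'} m =
      max (OPT F r c - UprinMenu F r m c) (OPT F r c' - UprinMenu F r m c') :=
  sSup_exists_mem_pair (fun d => OPT F r d - UprinMenu F r m d) c c'

theorem regretRand_pair (F : Act → Out → ℝ) (r : Out → ℝ) (c c' : Act → ℝ) (γ : RandCon Out) :
    regretRand F r {c, c'} γ =
      max (OPT F r c - UprinRand F r γ c) (OPT F r c' - UprinRand F r γ c') :=
  sSup_exists_mem_pair (fun d => OPT F r d - UprinRand F r γ d) c c'

theorem UprinRand_uniform2 (F : Act → Out → ℝ) (r p q : Out → ℝ) (c : Act → ℝ) :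
    UprinRand F r (uniform2 p q) c = (Uprin F r p c + Uprin F r q c) / 2 := by
  have sum_eq : UprinRand F r (uniform2 p q) c = 1 / 2 * Uprin F r p c + 1 / 2 * Uprin F r q c :=
    Fin.sum_univ_two _
  rw [sum_eq]
  ring

end PrincipalAgent

section HardInstance

/-- The outcome probabilities of the hard instance, in terms of `s = √(2δ)`: action `0` (the paper's
`a₁`) always leads to the success outcome `0`, action `1` fails to do so with probability `s`.
The remaining data are `Pi.single 0 x`: the reward with `x = 1`, the costs with `x = 0` and
`x = δ`, the contracts with `x = 0` and `x = √(δ/2)`. -/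
def hardProb (s : ℝ) : Fin 2 → Fin 2 → ℝ := fun a ω =>
  if a = 0 then (if ω = 0 then 1 else 0) else (if ω = 0 then 1 - s else s)

variable {s t : ℝ} {p c : Fin 2 → ℝ}

theorem hardProb_nonneg (hs0 : 0 ≤ s) (hs1 : s ≤ 1) (a ω : Fin 2) : 0 ≤ hardProb s a ω := by
  unfold hardProb
  split_ifs <;> linarith

theorem sum_hardProb_zero_mul (s : ℝ) (v : Fin 2 → ℝ) : ∑ ω, hardProb s 0 ω * v ω = v 0 := by
  simp [hardProb]

theorem sum_hardProb_one_mul (s : ℝ) (v : Fin 2 → ℝ) :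
    ∑ ω, hardProb s 1 ω * v ω = (1 - s) * v 0 + s * v 1 := by
  simp [hardProb]

theorem isBestResponse_hardProb_zero_iff :
    IsBestResponse (hardProb s) p c 0 ↔ c 0 - c 1 ≤ s * (p 0 - p 1) := by
  simp only [IsBestResponse, Uag, Fin.forall_fin_two, sum_hardProb_zero_mul, sum_hardProb_one_mul,
    le_refl, true_and]
  constructor <;> intro h <;> linarith

theorem isBestResponse_hardProb_one_iff :
    IsBestResponse (hardProb s) p c 1 ↔ s * (p 0 - p 1) ≤ c 0 - c 1 := by
  simp only [IsBestResponse, Uag, Fin.forall_fin_two, sum_hardProb_zero_mul, sum_hardProb_one_mul,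
    le_refl, and_true]
  constructor <;> intro h <;> linarith

theorem prinAct_hardProb_zero (s : ℝ) (p : Fin 2 → ℝ) :
    prinAct (hardProb s) (Pi.single 0 1) p 0 = 1 - p 0 := by
  rw [prinAct, sum_hardProb_zero_mul, Pi.single_eq_same]

theorem prinAct_hardProb_one (s : ℝ) (p : Fin 2 → ℝ) :
    prinAct (hardProb s) (Pi.single 0 1) p 1 = (1 - s) * (1 - p 0) - s * p 1 := by
  rw [prinAct, sum_hardProb_one_mul, Pi.single_eq_same, Pi.single_eq_of_ne one_ne_zero]
  ring

theorem prinAct_hardProb_one_le (hs0 : 0 ≤ s) (hs1 : s ≤ 1) (hp : IsContract p) :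
    prinAct (hardProb s) (Pi.single 0 1) p 1 ≤ 1 - s := by
  calc prinAct (hardProb s) (Pi.single 0 1) p 1
      ≤ ∑ ω, hardProb s 1 ω * (Pi.single 0 1 : Fin 2 → ℝ) ω :=
        prinAct_le_sum_reward (hardProb_nonneg hs0 hs1 1) hp
    _ = 1 - s := by rw [sum_hardProb_one_mul]; simp

theorem Uprin_hardProb_of_le (hs0 : 0 ≤ s) (hp : p 0 ≤ 1 + p 1)
    (h : c 0 - c 1 ≤ s * (p 0 - p 1)) :
    Uprin (hardProb s) (Pi.single 0 1) p c = 1 - p 0 := by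
  rw [(isBestResponse_hardProb_zero_iff.2 h).Uprin_eq, prinAct_hardProb_zero]
  simp only [Fin.forall_fin_two, prinAct_hardProb_zero, prinAct_hardProb_one]
  exact ⟨fun _ => le_rfl, fun _ => by nlinarith⟩

theorem Uprin_hardProb_of_lt (h : s * (p 0 - p 1) < c 0 - c 1) :
    Uprin (hardProb s) (Pi.single 0 1) p c = (1 - s) * (1 - p 0) - s * p 1 := by
  rw [(isBestResponse_hardProb_one_iff.2 h.le).Uprin_eq, prinAct_hardProb_one]
  simp only [Fin.forall_fin_two, isBestResponse_hardProb_zero_iff]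
  exact ⟨fun h' => absurd h' h.not_ge, fun _ => le_rfl⟩

theorem Uprin_hardProb_single_of_le {x k : ℝ} (hs0 : 0 ≤ s) (hx : x ≤ 1) (hk : k ≤ s * x) :
    Uprin (hardProb s) (Pi.single 0 1) (Pi.single 0 x) (Pi.single 0 k) = 1 - x := by
  simpa using Uprin_hardProb_of_le (p := Pi.single 0 x) (c := Pi.single 0 k) hs0 (by simpa using hx)
    (by simpa using hk)

theorem Uprin_hardProb_zero_half (hs0 : 0 ≤ s) :
    Uprin (hardProb s) (Pi.single 0 1) 0 (Pi.single 0 (s * (s / 2))) = 1 - s := by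
  rcases hs0.eq_or_lt with rfl | hs
  · simpa using Uprin_hardProb_single_of_le (s := 0) (x := 0) (k := 0) le_rfl zero_le_one (by simp)
  · have cost_pos : 0 < s * (s / 2) := by positivity
    simpa using Uprin_hardProb_of_lt (s := s) (p := 0) (c := Pi.single 0 (s * (s / 2)))
      (by simpa using cost_pos)

theorem le_payment_of_isBestResponse_hardProb_zero (hs0 : 0 ≤ s) (hts : t ≤ s) (hp : IsContract p)
    (h : IsBestResponse (hardProb s) p (Pi.single 0 (s * t)) 0) : t ≤ p 0 := by
  rcases hs0.eq_or_lt with rfl | hs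
  · exact hts.trans (hp 0)
  · have hmul : s * t ≤ s * (p 0 - p 1) := by simpa using isBestResponse_hardProb_zero_iff.1 h
    linarith [le_of_mul_le_mul_left hmul hs, hp 1]

theorem OPT_hardProb_single (hs1 : s ≤ 1) (ht0 : 0 ≤ t) (hts : t ≤ s) :
    OPT (hardProb s) (Pi.single 0 1) (Pi.single 0 (s * t)) = 1 - t := by
  have hs0 : 0 ≤ s := ht0.trans hts
  have hval := Uprin_hardProb_single_of_le hs0 (hts.trans hs1) (le_refl (s * t))
  have hcontract : IsContract (Pi.single 0 t : Fin 2 → ℝ) :=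
    fun ω => (Pi.single_nonneg (α := fun _ => ℝ)).2 ht0 ω
  rw [OPT_eq_of_forall_Uprin_le hcontract, hval]
  intro q hq
  obtain ⟨a, ha, hU⟩ :=
    exists_isBestResponse_Uprin_eq (hardProb s) (Pi.single 0 1) q (Pi.single 0 (s * t))
  rw [hval, hU]
  match a with
  | 0 =>
    rw [prinAct_hardProb_zero]
    linarith [le_payment_of_isBestResponse_hardProb_zero hs0 hts hq ha]
  | 1 => linarith [prinAct_hardProb_one_le hs0 hs1 hq]

theorem OPT_hardProb_zero (hs0 : 0 ≤ s) (hs1 : s ≤ 1) :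
    OPT (hardProb s) (Pi.single 0 1) 0 = 1 := by
  simpa using OPT_hardProb_single hs1 le_rfl hs0

theorem UprinMenu_hardProb_zero_add_payment_le {K : ℕ} (hs0 : 0 ≤ s) (m : Fin K → Fin 2 → ℝ)
    (i : Fin K) : UprinMenu (hardProb s) (Pi.single 0 1) m 0 + m i 0 ≤ 1 := by
  have surplus_le : ∀ a, ∑ ω, hardProb s a ω * (Pi.single 0 1 : Fin 2 → ℝ) ω -
      (0 : Fin 2 → ℝ) a ≤ 1 := by
    rw [Fin.forall_fin_two, sum_hardProb_zero_mul, sum_hardProb_one_mul]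
    simp [hs0]
  have payment_le : m i 0 ≤ agentBest (hardProb s) (m i) 0 := by
    have h := Uag_le_agentBest (hardProb s) (m i) 0 0
    rwa [Uag, sum_hardProb_zero_mul, Pi.zero_apply, sub_zero] at h
  linarith [UprinMenu_add_agentBest_le m surplus_le i]

theorem min_le_regretMenu_hardProb {K : ℕ} [NeZero K] (hs1 : s ≤ 1) (ht0 : 0 ≤ t) (hts : t ≤ s)
    (m : Fin K → Fin 2 → ℝ) (hm : ∀ i, IsContract (m i)) :
    min t (s - t) ≤ regretMenu (hardProb s) (Pi.single 0 1) {0, Pi.single 0 (s * t)} m := by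
  have hs0 : 0 ≤ s := ht0.trans hts
  rw [regretMenu_pair, OPT_hardProb_zero hs0 hs1, OPT_hardProb_single hs1 ht0 hts]
  obtain ⟨i, -, hi⟩ := exists_UprinMenu_eq (hardProb s) (Pi.single 0 1) m (Pi.single 0 (s * t))
  obtain ⟨a, ha, hU⟩ :=
    exists_isBestResponse_Uprin_eq (hardProb s) (Pi.single 0 1) (m i) (Pi.single 0 (s * t))
  match a with
  | 0 =>
    have payment_ge := le_payment_of_isBestResponse_hardProb_zero hs0 hts (hm i) ha
    have loss : t ≤ 1 - UprinMenu (hardProb s) (Pi.single 0 1) m 0 := by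
      linarith [UprinMenu_hardProb_zero_add_payment_le hs0 m i]
    exact (min_le_left _ _).trans (loss.trans (le_max_left _ _))
  | 1 =>
    have loss : s - t ≤ 1 - t - UprinMenu (hardProb s) (Pi.single 0 1) m (Pi.single 0 (s * t)) := by
      rw [hi, hU]
      linarith [prinAct_hardProb_one_le hs0 hs1 (hm i)]
    exact (min_le_right _ _).trans (loss.trans (le_max_right _ _))

theorem regretRand_hardProb_uniform2 (hs0 : 0 ≤ s) (hs1 : s ≤ 1) :
    regretRand (hardProb s) (Pi.single 0 1) {0, Pi.single 0 (s * (s / 2))}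
      (uniform2 0 (Pi.single 0 (s / 2))) = s / 4 := by
  have pay_zero : Uprin (hardProb s) (Pi.single 0 1) 0 0 = 1 := by
    simpa using Uprin_hardProb_single_of_le (x := 0) (k := 0) hs0 zero_le_one (by simp)
  have pay_half : ∀ k ≤ s * (s / 2),
      Uprin (hardProb s) (Pi.single 0 1) (Pi.single 0 (s / 2)) (Pi.single 0 k) = 1 - s / 2 :=
    fun k hk => Uprin_hardProb_single_of_le hs0 (by linarith) hk
  have pay_half_zero : Uprin (hardProb s) (Pi.single 0 1) (Pi.single 0 (s / 2)) 0 = 1 - s / 2 := by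
    simpa using pay_half 0 (by positivity)
  rw [regretRand_pair, UprinRand_uniform2, UprinRand_uniform2, OPT_hardProb_zero hs0 hs1,
    OPT_hardProb_single hs1 (by linarith) (by linarith), pay_zero, pay_half_zero,
    Uprin_hardProb_zero_half hs0, pay_half _ le_rfl]
  ring_nf
  exact max_self _

end HardInstance

/-- In the hard instance `I_δ` (for `δ ∈ [0,1/2]`):
(i) the randomized contract placing probability `1/2` on each of `p¹ = (0,0)` and
`p² = (√(δ/2), 0)` has regret exactly `√(δ/8)`; and
(ii) every menu of deterministic contracts of any finite size has regret at least
`√(δ/4)`. -/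
theorem hard_instance_randomization_helps
    (δ : ℝ) (hδ : δ ∈ Set.Icc (0:ℝ) (1/2))
    (F : Fin 2 → Fin 2 → ℝ)
    (hF : F = fun a ω =>
      if a = 0 then (if ω = 0 then (1:ℝ) else 0)
      else (if ω = 0 then 1 - Real.sqrt (2*δ) else Real.sqrt (2*δ)))
    (r : Fin 2 → ℝ) (hr : r = fun ω => if ω = 0 then (1:ℝ) else 0)
    (C : Set (Fin 2 → ℝ))
    (hC : C = {(fun _ => (0:ℝ)), (fun a => if a = 0 then δ else 0)})
    (p1 p2 : Fin 2 → ℝ)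
    (hp1 : p1 = fun _ => (0:ℝ))
    (hp2 : p2 = fun ω => if ω = 0 then Real.sqrt (δ/2) else 0) :
    regretRand F r C (uniform2 p1 p2) = Real.sqrt (δ/8) ∧
      ∀ (K : ℕ) (m : Fin (K+1) → Fin 2 → ℝ), (∀ i, IsContract (m i)) →
        regretMenu F r C m ≥ Real.sqrt (δ/4) := by
  have hs1 : √(2 * δ) ≤ 1 := Real.sqrt_le_one.2 (by linarith [hδ.2])
  have hs0 : 0 ≤ √(2 * δ) := Real.sqrt_nonneg _
  have cost_eq : δ = √(2 * δ) * (√(2 * δ) / 2) := by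
    linarith [Real.mul_self_sqrt (show 0 ≤ 2 * δ by linarith [hδ.1])]
  have half_eq : √(δ / 2) = √(2 * δ) / 2 := by
    rw [← sqrt_div_sq zero_le_two]; ring_nf
  have quarter_eq : √(δ / 8) = √(2 * δ) / 4 := by
    rw [← sqrt_div_sq zero_le_four]; ring_nf
  have prob_eq : F = hardProb √(2 * δ) := hF
  have costs_eq : C = {0, Pi.single 0 (√(2 * δ) * (√(2 * δ) / 2))} := by
    rw [← cost_eq, ← ite_eq_single]; exact hC
  rw [ite_eq_single] at hr hp2
  rw [prob_eq, hr, costs_eq, hp1, hp2, half_eq, quarter_eq]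
  refine ⟨regretRand_hardProb_uniform2 hs0 hs1, fun K m hm => ?_⟩
  calc √(δ / 4) ≤ √(δ / 2) := Real.sqrt_le_sqrt (by linarith [hδ.1])
    _ = min (√(2 * δ) / 2) (√(2 * δ) - √(2 * δ) / 2) := by rw [half_eq, sub_half, min_self]
    _ ≤ _ := min_le_regretMenu_hardProb hs1 (by linarith) (by linarith) m hm
end

section
/- Fix a principal–agent instance, η ∈ [0,1], β ∈ (0,1], a menu of randomized contracts Γ = (γ^1,…,γ^K), and functions t : C → {1,…,K} and g : C × ℝ_{≥0}^Ω → A such that (Γ,t,g) is η-incentive compatible. Then the menu Γ̃ := Linearize(Γ,β) satisfies, for every c ∈ C: U^p(Γ̃,c) ≥ ∑_{p ∈ supp(γ^{t(c)})} γ^{t(c)}_p · ∑_ω F_{g(c,p),ω}(r_ω − p_ω) − β − η/β. -/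
open Finset

variable {A Ω : Type} [Fintype A] [Fintype Ω] [Nonempty A] [Nonempty Ω]

/-- `Cε` is an `ε`-cover of the uncertainty set `C` (w.r.t. the L∞ norm). -/
def IsCover (C Cε : Set (A → ℝ)) (ε : ℝ) : Prop :=
  Cε ⊆ C ∧ ∀ c ∈ C, ∃ c' ∈ Cε, ‖c - c'‖ ≤ ε

/-- The triplet `(Γ, t, g)` is `η`-incentive compatible: for every `c ∈ C`, following the
recommendation `t` (selection from the menu) and `g` (action played given the realized
deterministic contract) loses the agent at most `η` w.r.t. any element of the menu. -/
def EtaIC (F : A → Ω → ℝ) (C : Set (A → ℝ)) {K : ℕ} (Γ : Fin K → RandCon Ω)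
    (t : (A → ℝ) → Fin K) (g : (A → ℝ) → (Ω → ℝ) → A) (η : ℝ) : Prop :=
  ∀ c ∈ C, ∀ i : Fin K,
    (∑ j, (Γ (t c)).q j *
      ((∑ ω, F (g c ((Γ (t c)).ps j)) ω * (Γ (t c)).ps j ω) - c (g c ((Γ (t c)).ps j))))
      ≥ UagRand F (Γ i) c - η

/-- `Linearize`: replace every deterministic contract `p` in the support of a randomized
contract with `p + β (r − p)`, keeping the same probabilities. -/
def RandCon.linearize {Ω : Type} (γ : RandCon Ω) (β : ℝ) (r : Ω → ℝ) : RandCon Ω where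
  n := γ.n
  ps := fun i ω => γ.ps i ω + β * (r ω - γ.ps i ω)
  q := γ.q
  q_nonneg := γ.q_nonneg
  q_sum := γ.q_sum

/-!
Linearization adds `β` times the principal's utility to the agent's utility and multiplies the
principal's utility by `1 - β`. Let `W`, `X` be the agent's and the principal's utility in the
original menu under the prescribed behavior, and `V`, `Y` those under the behavior the agent adopts
when facing the linearized menu. Optimality in the linearized menu gives `W + β X ≤ V + β Y`, while
incentive compatibility gives `V ≤ W + η`, so `X - Y ≤ η / β`. The principal ends up with
`(1 - β) Y`, and passing from `Y` to `(1 - β) Y` costs at most `β`, since `Y ≤ 1`.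
-/

theorem exists_forall_le_and_eq_sSup {ι α β : Type*} [Finite ι] [Nonempty ι] [LinearOrder α]
    [ConditionallyCompleteLinearOrder β] (f : ι → α) (g : ι → β) :
    ∃ i, (∀ j, f j ≤ f i) ∧ g i = sSup {x | ∃ i, (∀ j, f j ≤ f i) ∧ x = g i} := by
  obtain ⟨i, hi⟩ := Finite.exists_max f
  have hfin : {x | ∃ i, (∀ j, f j ≤ f i) ∧ x = g i}.Finite :=
    (Set.finite_range g).subset fun _ ⟨j, _, hj⟩ => ⟨j, hj.symm⟩
  have hne : {x | ∃ i, (∀ j, f j ≤ f i) ∧ x = g i}.Nonempty := ⟨g i, i, hi, rfl⟩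
  obtain ⟨k, hk, hgk⟩ := hne.csSup_mem hfin
  exact ⟨k, hk, hgk.symm⟩

section Linearize

-- Shadows the file-level variables, whose instances would otherwise enter every lemma.
variable {A Ω : Type} [Fintype Ω]

theorem prinAct_le_of_forall_sub_le {F : A → Ω → ℝ} {r p : Ω → ℝ} {a : A} {M : ℝ}
    (hF : ∀ ω, 0 ≤ F a ω) (hF_sum : ∑ ω, F a ω = 1) (hM : ∀ ω, r ω - p ω ≤ M) :
    prinAct F r p a ≤ M :=
  calc ∑ ω, F a ω * (r ω - p ω)
      ≤ ∑ ω, F a ω * M := sum_le_sum fun ω _ => mul_le_mul_of_nonneg_left (hM ω) (hF ω)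
    _ = M := by rw [← sum_mul, hF_sum, one_mul]

theorem Uag_linearize (F : A → Ω → ℝ) (r p : Ω → ℝ) (β : ℝ) (c : A → ℝ) (a : A) :
    Uag F (fun ω => p ω + β * (r ω - p ω)) c a = Uag F p c a + β * prinAct F r p a := by
  simp only [Uag, prinAct, mul_add, sum_add_distrib, mul_sum, mul_left_comm β]
  ring

theorem prinAct_linearize (F : A → Ω → ℝ) (r p : Ω → ℝ) (β : ℝ) (a : A) :
    prinAct F r (fun ω => p ω + β * (r ω - p ω)) a = (1 - β) * prinAct F r p a := by
  simp only [prinAct, mul_sum]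
  exact sum_congr rfl fun ω _ => by ring

theorem exists_Uag_eq_iSup_and_prinAct_eq_Uprin [Finite A] [Nonempty A]
    (F : A → Ω → ℝ) (r p : Ω → ℝ) (c : A → ℝ) :
    ∃ a, Uag F p c a = (⨆ a', Uag F p c a') ∧ prinAct F r p a = Uprin F r p c := by
  obtain ⟨a, hmax, hprin⟩ := exists_forall_le_and_eq_sSup (Uag F p c) (prinAct F r p)
  exact ⟨a, (le_ciSup (Set.finite_range _).bddAbove a).antisymm (ciSup_le hmax), hprin⟩

namespace RandCon

/-- The agent's expected utility under `γ` when the `j`-th contract in its support is answered by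
the action `a j`. Plans are indexed by positions in the support, not by contracts. -/
noncomputable def planUag (γ : RandCon Ω) (F : A → Ω → ℝ) (c : A → ℝ) (a : Fin γ.n → A) : ℝ :=
  ∑ j, γ.q j * Uag F (γ.ps j) c (a j)

/-- The principal's expected utility under `γ` when the agent follows the plan `a`,
as in `RandCon.planUag`. -/
noncomputable def planUprin (γ : RandCon Ω) (F : A → Ω → ℝ) (r : Ω → ℝ) (a : Fin γ.n → A) : ℝ :=
  ∑ j, γ.q j * prinAct F r (γ.ps j) (a j)

theorem planUag_le_UagRand [Finite A] (γ : RandCon Ω) (F : A → Ω → ℝ) (c : A → ℝ)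
    (a : Fin γ.n → A) : γ.planUag F c a ≤ UagRand F γ c :=
  sum_le_sum fun j _ =>
    mul_le_mul_of_nonneg_left (le_ciSup (Set.finite_range _).bddAbove (a j)) (γ.q_nonneg j)

theorem exists_planUag_eq_UagRand_and_planUprin_eq_UprinRand [Finite A] [Nonempty A]
    (γ : RandCon Ω) (F : A → Ω → ℝ) (r : Ω → ℝ) (c : A → ℝ) :
    ∃ a, γ.planUag F c a = UagRand F γ c ∧ γ.planUprin F r a = UprinRand F r γ c := by
  choose a hag hprin using fun j => exists_Uag_eq_iSup_and_prinAct_eq_Uprin F r (γ.ps j) c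
  exact ⟨a, by simp only [planUag, UagRand, hag], by simp only [planUprin, UprinRand, hprin]⟩

theorem planUprin_le {γ : RandCon Ω} {F : A → Ω → ℝ} {r : Ω → ℝ} {M : ℝ} {a : Fin γ.n → A}
    (hM : ∀ j, prinAct F r (γ.ps j) (a j) ≤ M) : γ.planUprin F r a ≤ M :=
  calc ∑ j, γ.q j * prinAct F r (γ.ps j) (a j)
      ≤ ∑ j, γ.q j * M := sum_le_sum fun j _ => mul_le_mul_of_nonneg_left (hM j) (γ.q_nonneg j)
    _ = M := by rw [← sum_mul, γ.q_sum, one_mul]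

theorem planUag_linearize (γ : RandCon Ω) (F : A → Ω → ℝ) (r : Ω → ℝ) (β : ℝ) (c : A → ℝ)
    (a : Fin γ.n → A) :
    (γ.linearize β r).planUag F c a = γ.planUag F c a + β * γ.planUprin F r a := by
  simp only [planUag, planUprin, linearize, Uag_linearize, mul_add, sum_add_distrib, mul_sum,
    mul_left_comm β]
  rfl

theorem planUprin_linearize (γ : RandCon Ω) (F : A → Ω → ℝ) (r : Ω → ℝ) (β : ℝ)
    (a : Fin γ.n → A) :
    (γ.linearize β r).planUprin F r a = (1 - β) * γ.planUprin F r a := by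
  simp only [planUprin, linearize, prinAct_linearize, mul_sum, mul_left_comm (1 - β)]
  rfl

end RandCon

theorem exists_UagRand_max_and_UprinRand_eq_UprinRMenu {K : ℕ} [NeZero K] (F : A → Ω → ℝ)
    (r : Ω → ℝ) (Γ : Fin K → RandCon Ω) (c : A → ℝ) :
    ∃ i, (∀ j, UagRand F (Γ j) c ≤ UagRand F (Γ i) c) ∧
      UprinRand F r (Γ i) c = UprinRMenu F r Γ c :=
  exists_forall_le_and_eq_sSup (fun i => UagRand F (Γ i) c) fun i => UprinRand F r (Γ i) c

theorem planUprin_sub_planUprin_le_div [Finite A] {γ δ : RandCon Ω}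
    {F : A → Ω → ℝ} {r : Ω → ℝ} {c : A → ℝ} {η β : ℝ} (hβ : 0 < β)
    {a : Fin γ.n → A} {b : Fin δ.n → A}
    (hIC : UagRand F δ c - η ≤ γ.planUag F c a)
    (hpref : (γ.linearize β r).planUag F c a ≤ (δ.linearize β r).planUag F c b) :
    γ.planUprin F r a - δ.planUprin F r b ≤ η / β := by
  rw [RandCon.planUag_linearize, RandCon.planUag_linearize] at hpref
  have hδ := δ.planUag_le_UagRand F c b
  rw [le_div_iff₀ hβ]
  linarith

theorem linearize_menu_guarantee_general [Finite A] [Nonempty A] {F : A → Ω → ℝ} {r : Ω → ℝ}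
    {c : A → ℝ} {η β M : ℝ} (hβ : 0 < β) {K : ℕ} {Γ : Fin K → RandCon Ω}
    (hM : ∀ i j a, prinAct F r ((Γ i).ps j) a ≤ M) (k : Fin K) (a : Fin (Γ k).n → A)
    (hIC : ∀ i, UagRand F (Γ i) c - η ≤ (Γ k).planUag F c a) :
    (Γ k).planUprin F r a - β * M - η / β ≤
      UprinRMenu F r (fun i => (Γ i).linearize β r) c := by
  have : NeZero K := ⟨k.pos.ne'⟩
  obtain ⟨i, hmax, hmenu⟩ :=
    exists_UagRand_max_and_UprinRand_eq_UprinRMenu F r (fun i => (Γ i).linearize β r) c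
  obtain ⟨b, hb_agent, hb_prin⟩ :=
    ((Γ i).linearize β r).exists_planUag_eq_UagRand_and_planUprin_eq_UprinRand F r c
  have hpref : ((Γ k).linearize β r).planUag F c a ≤ ((Γ i).linearize β r).planUag F c b :=
    (((Γ k).linearize β r).planUag_le_UagRand F c a).trans ((hmax k).trans_eq hb_agent.symm)
  have hloss : (Γ k).planUprin F r a - (Γ i).planUprin F r b ≤ η / β :=
    planUprin_sub_planUprin_le_div hβ (hIC i) hpref
  have hshare : β * (Γ i).planUprin F r b ≤ β * M :=
    mul_le_mul_of_nonneg_left (RandCon.planUprin_le fun j => hM i j (b j)) hβ.le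
  calc (Γ k).planUprin F r a - β * M - η / β
      ≤ (1 - β) * (Γ i).planUprin F r b := by linarith
    _ = ((Γ i).linearize β r).planUprin F r b := ((Γ i).planUprin_linearize F r β b).symm
    _ = UprinRMenu F r (fun i => (Γ i).linearize β r) c := hb_prin.trans hmenu

end Linearize

/-- If `(Γ,t,g)` is `η`-incentive compatible, then the linearized menu
`Γ̃ = Linearize(Γ,β)` guarantees the principal, against every `c ∈ C`, at least the
utility obtained under the behavior prescribed by `t, g`, minus `β + η/β`. -/
theorem linearize_menu_guarantee
    {A Ω : Type} [Fintype A] [Fintype Ω] [Nonempty A] [Nonempty Ω]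
    (F : A → Ω → ℝ) (r : Ω → ℝ) (C : Set (A → ℝ))
    (hInst : IsPAInstance F r C)
    (η : ℝ) (hη : η ∈ Set.Icc (0:ℝ) 1)
    (β : ℝ) (hβ : β ∈ Set.Ioc (0:ℝ) 1)
    (K : ℕ) (hK : 0 < K)
    (Γ : Fin K → RandCon Ω) (hΓ : ∀ i, (Γ i).valid)
    (t : (A → ℝ) → Fin K) (g : (A → ℝ) → (Ω → ℝ) → A)
    (hIC : EtaIC F C Γ t g η) :
    ∀ c ∈ C,
      UprinRMenu F r (fun i => (Γ i).linearize β r) c ≥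
        (∑ j, (Γ (t c)).q j *
          ∑ ω, F (g c ((Γ (t c)).ps j)) ω * (r ω - (Γ (t c)).ps j ω)) - β - η / β := by
  intro c hc
  have hprin_le_one (i j a) : prinAct F r ((Γ i).ps j) a ≤ 1 :=
    prinAct_le_of_forall_sub_le (fun ω => (hInst.F_mem a ω).1) (hInst.F_sum a)
      fun ω => by linarith [(hInst.r_mem ω).2, hΓ i j ω]
  simpa only [mul_one] using! linearize_menu_guarantee_general hβ.1 hprin_le_one (t c)
    (fun j => g c ((Γ (t c)).ps j)) (hIC c hc)
end
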